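/- Let G be a chordal graph and let u and w be two distinct non-adjacent simplicial vertices of G. Then the number of perfect elimination orderings of G is at least the number of perfect elimination orderings of G − u plus the number of perfect elimination orderings of G − w. -/

import Mathlib

open SimpleGraph

/-- `G` is chordal: every cycle of length at least 4 has a chord, i.e. an edge of `G`
joining two non-consecutive vertices of the cycle. -/
def IsChordal {V : Type*} (G : SimpleGraph V) : Prop :=
  ∀ (u : V) (p : G.Walk u u), p.IsCycle → 4 ≤ p.length →
    ∃ a b : V, a ∈ p.support ∧ b ∈ p.support ∧ G.Adj a b ∧ s(a, b) ∉ p.edges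

/-- `σ` is a perfect elimination ordering of `G`: for each `i`, the neighbours of
`σ i` occurring later in the ordering form a clique. -/
def IsPEO {V : Type*} {n : ℕ} (G : SimpleGraph V) (σ : Fin n ≃ V) : Prop :=
  ∀ i : Fin n, G.IsClique {w : V | G.Adj (σ i) w ∧ ∃ j : Fin n, i < j ∧ σ j = w}

/-- The number of perfect elimination orderings of `G`. -/
noncomputable def numPEO {V : Type*} [Fintype V] (G : SimpleGraph V) : ℕ :=
  {σ : Fin (Fintype.card V) ≃ V | IsPEO G σ}.ncard

/-!
The first vertex of a perfect elimination ordering is simplicial, and removing it leaves a perfect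
elimination ordering of the rest; conversely, a simplicial vertex may be put in front of any
perfect elimination ordering of the rest. So sorting the orderings of `G` by their first vertex
writes their number as the sum of those of `G - v` over the simplicial vertices `v`, of which `u`
and `w` are two.
-/

section Cons

variable {V : Type*} [DecidableEq V] {n : ℕ}

/-- The ordering of `V` that starts with `v` and continues with the ordering `τ` of the other
vertices, an analogue of `Fin.cons` for bijections. -/
def consOrdering (v : V) (τ : Fin n ≃ {z : V | z ≠ v}) : Fin (n + 1) ≃ V :=
  (finSuccEquiv n).trans ((Equiv.optionSubtype v).symm τ : Option (Fin n) ≃ V)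

@[simp]
theorem consOrdering_zero (v : V) (τ : Fin n ≃ {z : V | z ≠ v}) : consOrdering v τ 0 = v := by
  simp [consOrdering]

@[simp]
theorem consOrdering_succ (v : V) (τ : Fin n ≃ {z : V | z ≠ v}) (i : Fin n) :
    consOrdering v τ i.succ = τ i := by
  simp [consOrdering]

theorem consOrdering_injective (v : V) : Function.Injective (consOrdering (n := n) v) := by
  intro τ τ' h
  ext i
  simpa using DFunLike.congr_fun h i.succ

theorem exists_consOrdering_eq (σ : Fin (n + 1) ≃ V) : ∃ τ, consOrdering (σ 0) τ = σ := by
  refine ⟨Equiv.optionSubtype (σ 0) ⟨(finSuccEquiv n).symm.trans σ, by simp⟩, ?_⟩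
  ext i
  cases i using Fin.cases with
  | zero => rw [consOrdering_zero]
  | succ i => rw [consOrdering_succ]; rfl

end Cons

section IsPEO

variable {V : Type*} {n : ℕ} {G : SimpleGraph V}

theorem isPEO_iff {σ : Fin n ≃ V} :
    IsPEO G σ ↔ ∀ i j k, i < j → i < k → j ≠ k →
      G.Adj (σ i) (σ j) → G.Adj (σ i) (σ k) → G.Adj (σ j) (σ k) := by
  constructor
  · intro h i j k hij hik hjk hj hk
    exact h i ⟨hj, j, hij, rfl⟩ ⟨hk, k, hik, rfl⟩ (σ.injective.ne hjk)
  · rintro h i _ ⟨hj, j, hij, rfl⟩ _ ⟨hk, k, hik, rfl⟩ hjk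
    exact h i j k hij hik (ne_of_apply_ne σ hjk) hj hk

theorem isClique_neighborSet_zero_iff {σ : Fin (n + 1) ≃ V} :
    G.IsClique (G.neighborSet (σ 0)) ↔ ∀ j k : Fin n, j ≠ k →
      G.Adj (σ 0) (σ j.succ) → G.Adj (σ 0) (σ k.succ) → G.Adj (σ j.succ) (σ k.succ) := by
  constructor
  · intro h j k hjk hj hk
    exact h hj hk (σ.injective.ne ((Fin.succ_injective n).ne hjk))
  · have exists_succ {x : V} (hx : G.Adj (σ 0) x) : ∃ j : Fin n, σ j.succ = x := by
      obtain ⟨i, rfl⟩ := σ.surjective x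
      obtain ⟨j, rfl⟩ := Fin.exists_succ_eq.2 (ne_of_apply_ne σ hx.ne')
      exact ⟨j, rfl⟩
    intro h x hx y hy hxy
    obtain ⟨j, rfl⟩ := exists_succ hx
    obtain ⟨k, rfl⟩ := exists_succ hy
    exact h j k (ne_of_apply_ne (fun i => σ i.succ) hxy) hx hy

theorem isPEO_consOrdering_iff [DecidableEq V] {v : V} {τ : Fin n ≃ {z : V | z ≠ v}} :
    IsPEO G (consOrdering v τ) ↔
      G.IsClique (G.neighborSet v) ∧ IsPEO (G.induce {z : V | z ≠ v}) τ := by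
  have simplicial_iff := isClique_neighborSet_zero_iff (G := G) (σ := consOrdering v τ)
  simp only [consOrdering_zero, consOrdering_succ] at simplicial_iff
  simp [isPEO_iff, Fin.forall_fin_succ, simplicial_iff]

theorem IsPEO.isClique_neighborSet_zero {σ : Fin (n + 1) ≃ V} (h : IsPEO G σ) :
    G.IsClique (G.neighborSet (σ 0)) := by
  classical
  obtain ⟨τ, hτ⟩ := exists_consOrdering_eq σ
  rw [← hτ, isPEO_consOrdering_iff] at h
  exact h.1

theorem setOf_isPEO_zero_eq [DecidableEq V] {v : V} (hv : G.IsClique (G.neighborSet v)) :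
    {σ : Fin (n + 1) ≃ V | IsPEO G σ ∧ σ 0 = v} =
      consOrdering v '' {τ | IsPEO (G.induce {z : V | z ≠ v}) τ} := by
  ext σ
  constructor
  · rintro ⟨hσ, rfl⟩
    obtain ⟨τ, hτ⟩ := exists_consOrdering_eq σ
    rw [← hτ, isPEO_consOrdering_iff] at hσ
    exact ⟨τ, hσ.2, hτ⟩
  · rintro ⟨τ, hτ, rfl⟩
    exact ⟨isPEO_consOrdering_iff.2 ⟨hv, hτ⟩, consOrdering_zero v τ⟩

end IsPEO

section NumPEO

variable {V : Type*} [Fintype V] (G : SimpleGraph V)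

theorem numPEO_eq_ncard {n : ℕ} (hn : Fintype.card V = n) :
    numPEO G = {σ : Fin n ≃ V | IsPEO G σ}.ncard := by
  subst hn
  rfl

variable [DecidableEq V]

theorem ncard_setOf_isPEO_zero_eq {n : ℕ} (hn : Fintype.card V = n + 1) {v : V}
    (hv : G.IsClique (G.neighborSet v)) :
    {σ : Fin (n + 1) ≃ V | IsPEO G σ ∧ σ 0 = v}.ncard = numPEO (G.induce {z : V | z ≠ v}) := by
  have card_delete : Fintype.card {z : V | z ≠ v} = n := by
    rw [Set.card_ne_eq, hn, Nat.add_sub_cancel]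
  rw [setOf_isPEO_zero_eq hv, Set.ncard_image_of_injective _ (consOrdering_injective v),
    numPEO_eq_ncard _ card_delete]

theorem numPEO_eq_sum_simplicial [Nonempty V]
    [DecidablePred fun v => G.IsClique (G.neighborSet v)] :
    numPEO G = ∑ v with G.IsClique (G.neighborSet v), numPEO (G.induce {z : V | z ≠ v}) := by
  classical
  obtain ⟨n, hn⟩ := Nat.exists_eq_add_one_of_ne_zero (Fintype.card_ne_zero (α := V))
  calc
    numPEO G = {σ : Fin (n + 1) ≃ V | IsPEO G σ}.ncard := numPEO_eq_ncard G hn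
    _ = ∑ v with G.IsClique (G.neighborSet v),
          {σ : Fin (n + 1) ≃ V | IsPEO G σ ∧ σ 0 = v}.ncard := by
      simp only [Set.ncard_eq_toFinset_card', Set.toFinset_ofPred, ← Finset.filter_filter]
      refine Finset.card_eq_sum_card_fiberwise fun σ hσ => ?_
      have hPEO : IsPEO G σ := by simpa using hσ
      simpa using hPEO.isClique_neighborSet_zero
    _ = ∑ v with G.IsClique (G.neighborSet v), numPEO (G.induce {z : V | z ≠ v}) :=
      Finset.sum_congr rfl fun v hv =>
        ncard_setOf_isPEO_zero_eq G hn (Finset.mem_filter.1 hv).2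

theorem stmt14_general (s : Finset V) (hs : ∀ v ∈ s, G.IsClique (G.neighborSet v)) :
    ∑ v ∈ s, numPEO (G.induce {z : V | z ≠ v}) ≤ numPEO G := by
  classical
  obtain rfl | ⟨v, -⟩ := s.eq_empty_or_nonempty
  · simp
  · have : Nonempty V := ⟨v⟩
    rw [numPEO_eq_sum_simplicial]
    exact Finset.sum_le_sum_of_subset fun v hv => by simpa using hs v hv

end NumPEO

/-- If `u` and `w` are distinct non-adjacent simplicial vertices of a chordal graph `G`,
then the number of perfect elimination orderings of `G` is at least the number of perfect
elimination orderings of `G - u` plus the number of perfect elimination orderings of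
`G - w`. -/
theorem stmt14 {V : Type*} [Fintype V] [DecidableEq V] (G : SimpleGraph V)
    (hG : IsChordal G) (u w : V) (huw : u ≠ w) (hnadj : ¬ G.Adj u w)
    (hu : G.IsClique (G.neighborSet u)) (hw : G.IsClique (G.neighborSet w)) :
    numPEO (G.induce {z : V | z ≠ u}) + numPEO (G.induce {z : V | z ≠ w}) ≤ numPEO G := by
  simpa only [Finset.sum_pair huw] using stmt14_general G {u, w} (by simp [hu, hw])
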